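/- The abelianizing filtration of A(1) is finer than the May filtration: for every natural number n, the n-th power Iⁿ of the augmentation ideal I = (Sq1, Sq2) of A(1) is contained in the n-th layer Fⁿ of the abelianizing filtration, where F⁰ = A(1), F¹ = (Sq1, Sq2), F² = (Sq2), F³ = (Sq1·Sq2, Sq2·Sq1), F⁴ = (Q₀), F⁵ = (Sq1·Q₀, Sq2·Q₀), F⁶ = (Sq2·Q₀), F⁷ = (Sq1·Sq2·Q₀), and Fⁿ = 0 for n ≥ 8. -/

import Mathlib

/-- The relations defining `A(1)`: `Sq¹·Sq¹ = 0` and `Sq²·Sq² + Sq¹·Sq²·Sq¹ = 0`. -/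
inductive A1Rel : FreeAlgebra (ZMod 2) (Fin 2) → FreeAlgebra (ZMod 2) (Fin 2) → Prop
  | sq1 : A1Rel (FreeAlgebra.ι (ZMod 2) 0 * FreeAlgebra.ι (ZMod 2) 0) 0
  | sq2 : A1Rel (FreeAlgebra.ι (ZMod 2) 1 * FreeAlgebra.ι (ZMod 2) 1 +
      FreeAlgebra.ι (ZMod 2) 0 * FreeAlgebra.ι (ZMod 2) 1 * FreeAlgebra.ι (ZMod 2) 0) 0

/-- `A(1)`, the subalgebra of the mod 2 Steenrod algebra generated by `Sq¹` and `Sq²`, presented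
as the quotient of the free `F₂`-algebra on two generators `Sq1, Sq2` by the two-sided ideal
generated by `Sq1·Sq1` and `Sq2·Sq2 + Sq1·Sq2·Sq1`. -/
abbrev A1 : Type := RingQuot A1Rel

/-- The image of `Sq¹` in `A(1)`. -/
noncomputable def Sq1 : A1 := RingQuot.mkAlgHom (ZMod 2) A1Rel (FreeAlgebra.ι (ZMod 2) 0)

/-- The image of `Sq²` in `A(1)`. -/
noncomputable def Sq2 : A1 := RingQuot.mkAlgHom (ZMod 2) A1Rel (FreeAlgebra.ι (ZMod 2) 1)

/-- Milnor's element `Q₀ = Sq¹·Sq² + Sq²·Sq¹` in `A(1)`. -/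
noncomputable def Q0 : A1 := Sq1 * Sq2 + Sq2 * Sq1

/-- The abelianizing filtration of `A(1)`, a decreasing filtration by two-sided ideals. -/
noncomputable def abFilt : ℕ → TwoSidedIdeal A1
  | 0 => ⊤
  | 1 => TwoSidedIdeal.span {Sq1, Sq2}
  | 2 => TwoSidedIdeal.span {Sq2}
  | 3 => TwoSidedIdeal.span {Sq1 * Sq2, Sq2 * Sq1}
  | 4 => TwoSidedIdeal.span {Q0}
  | 5 => TwoSidedIdeal.span {Sq1 * Q0, Sq2 * Q0}
  | 6 => TwoSidedIdeal.span {Sq2 * Q0}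
  | 7 => TwoSidedIdeal.span {Sq1 * Sq2 * Q0}
  | _ + 8 => ⊥

theorem A1.aa : Sq1 * Sq1 = 0 := by
  have h := RingQuot.mkAlgHom_rel (ZMod 2) A1Rel.sq1
  simpa [Sq1, map_mul] using h

theorem A1.char2 (x : A1) : x + x = 0 := by
  have h : ((1 : ZMod 2) + 1) • x = 0 := by
    rw [show (1 : ZMod 2) + 1 = 0 by decide, zero_smul]
  simpa [add_smul] using h

theorem A1.bb : Sq2 * Sq2 = Sq1 * Sq2 * Sq1 := by
  have h := RingQuot.mkAlgHom_rel (ZMod 2) A1Rel.sq2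
  have h' : Sq2 * Sq2 + Sq1 * Sq2 * Sq1 = 0 := by
    simpa [Sq1, Sq2, map_mul, map_add] using h
  calc Sq2 * Sq2 = (Sq2 * Sq2 + Sq1 * Sq2 * Sq1) + Sq1 * Sq2 * Sq1 := by
        rw [add_assoc, A1.char2, add_zero]
    _ = _ := by rw [h', zero_add]

/-- The left ideal generated by the two generators. -/
noncomputable def A1.L : Ideal A1 := Ideal.span {Sq1, Sq2}

theorem A1.a_mem : Sq1 ∈ A1.L := Ideal.subset_span (by simp)
theorem A1.b_mem : Sq2 ∈ A1.L := Ideal.subset_span (by simp)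

theorem A1.L_right (x : A1) : ∀ l ∈ A1.L, l * x ∈ A1.L := by
  obtain ⟨y, rfl⟩ := RingQuot.mkAlgHom_surjective (ZMod 2) A1Rel x
  induction y using FreeAlgebra.induction with
  | grade0 r =>
    intro l hl
    rw [AlgHom.commutes, ← Algebra.commutes]
    exact A1.L.mul_mem_left _ hl
  | grade1 i =>
    intro l hl
    fin_cases i
    · exact A1.L.mul_mem_left _ A1.a_mem
    · exact A1.L.mul_mem_left _ A1.b_mem
  | mul u v hu hv =>
    intro l hl
    rw [map_mul, ← mul_assoc]
    exact hv _ (hu _ hl)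
  | add u v hu hv =>
    intro l hl
    rw [map_add, mul_add]
    exact A1.L.add_mem (hu _ hl) (hv _ hl)

instance A1.L_two : A1.L.IsTwoSided := ⟨fun b h => A1.L_right b _ h⟩

theorem A1.I_le : (TwoSidedIdeal.span {Sq1, Sq2} : TwoSidedIdeal A1).asIdeal ≤ A1.L := by
  intro x hx
  rw [TwoSidedIdeal.mem_asIdeal, TwoSidedIdeal.mem_span_iff] at hx
  have := hx A1.L.toTwoSided (by
    rintro y (rfl | rfl)
    · simpa using A1.a_mem
    · simpa using A1.b_mem)
  simpa using this

theorem A1.step (S : Set A1) (K : Ideal A1) (h : ∀ s ∈ S, Sq1 * s ∈ K ∧ Sq2 * s ∈ K) :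
    A1.L * Ideal.span S ≤ K := by
  rw [Ideal.mul_le]
  intro r hr k hk
  induction hk using Submodule.span_induction generalizing r with
  | zero => simp
  | add u v _ _ hu hv => rw [mul_add]; exact K.add_mem (hu r hr) (hv r hr)
  | smul c u _ hu =>
    rw [smul_eq_mul, ← mul_assoc]
    exact hu _ (A1.L_right c r hr)
  | mem s hs =>
    unfold A1.L at hr
    obtain ⟨p, q, rfl⟩ := Ideal.mem_span_pair.1 hr
    rw [add_mul, mul_assoc, mul_assoc]
    exact K.add_mem (K.mul_mem_left _ (h s hs).1) (K.mul_mem_left _ (h s hs).2)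

theorem A1.aa' (x : A1) : Sq1 * (Sq1 * x) = 0 := by rw [← mul_assoc, A1.aa, zero_mul]
theorem A1.bb1 : Sq2 * Sq2 = Sq1 * (Sq2 * Sq1) := by rw [A1.bb, mul_assoc]
theorem A1.bb' (x : A1) : Sq2 * (Sq2 * x) = Sq1 * (Sq2 * (Sq1 * x)) := by
  rw [← mul_assoc, A1.bb]; simp only [mul_assoc]
theorem A1.baba : Sq2 * (Sq1 * (Sq2 * Sq1)) = Sq1 * (Sq2 * (Sq1 * Sq2)) := by
  rw [← A1.bb1, A1.bb']

theorem A1.L2 : A1.L ^ 2 ≤ Ideal.span {Sq1 * Sq2, Sq2 * Sq1} := by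
  rw [Submodule.pow_succ' _ (by norm_num), Submodule.pow_one]
  refine A1.step {Sq1, Sq2} _ ?_
  rintro s (rfl | rfl)
  · exact ⟨by simp [A1.aa], Ideal.subset_span (by simp)⟩
  · refine ⟨Ideal.subset_span (by simp), ?_⟩
    rw [A1.bb1]
    exact Ideal.mul_mem_left _ _ (Ideal.subset_span (by simp))

theorem A1.L3 : A1.L ^ 3 ≤ Ideal.span {Sq1 * (Sq2 * Sq1), Sq2 * (Sq1 * Sq2)} := by
  rw [Submodule.pow_succ' _ (by norm_num)]
  refine (Ideal.mul_mono_right A1.L2).trans (A1.step _ _ ?_)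
  rintro s (rfl | rfl)
  · exact ⟨by simp [A1.aa'], Ideal.subset_span (by simp)⟩
  · exact ⟨Ideal.subset_span (by simp), by simp [A1.bb', A1.aa]⟩

theorem A1.L4 : A1.L ^ 4 ≤ Ideal.span {Sq1 * (Sq2 * (Sq1 * Sq2))} := by
  rw [Submodule.pow_succ' _ (by norm_num)]
  refine (Ideal.mul_mono_right A1.L3).trans (A1.step _ _ ?_)
  rintro s (rfl | rfl)
  · exact ⟨by simp [A1.aa'], by rw [A1.baba]; exact Ideal.subset_span (by simp)⟩
  · exact ⟨Ideal.subset_span (by simp), by simp [A1.bb', A1.aa']⟩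

theorem A1.L5 : A1.L ^ 5 ≤ ⊥ := by
  rw [Submodule.pow_succ' _ (by norm_num)]
  refine (Ideal.mul_mono_right A1.L4).trans (A1.step _ _ ?_)
  rintro s rfl
  exact ⟨by simp [A1.aa'], by rw [← A1.baba]; simp [A1.bb', A1.aa', A1.aa]⟩

theorem A1.L_big (m : ℕ) : A1.L ^ (m + 5) ≤ ⊥ := by
  induction m with
  | zero => exact A1.L5
  | succ m ih =>
    rw [show m + 1 + 5 = (m + 5) + 1 by omega, Submodule.pow_succ' _ (by omega)]
    exact (Ideal.mul_mono_right ih).trans (by simp)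

theorem A1.L_pow (n : ℕ) :
    ((TwoSidedIdeal.span {Sq1, Sq2} : TwoSidedIdeal A1).asIdeal) ^ n ≤ A1.L ^ n :=
  Ideal.pow_right_mono A1.I_le n

/-- The abelianizing filtration of `A(1)` is finer than the May filtration: for every `n`,
the `n`-th power of the augmentation ideal `I = (Sq1, Sq2)` is contained in the `n`-th layer
of the abelianizing filtration. -/
theorem mayFilt_le_abFilt (n : ℕ) :
    ((TwoSidedIdeal.span {Sq1, Sq2} : TwoSidedIdeal A1).asIdeal) ^ n ≤ (abFilt n).asIdeal := by
  match n with
  | 0 => intro x _; simp [abFilt]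
  | 1 => rw [Submodule.pow_one]; exact le_refl _
  | 2 =>
    refine (A1.L_pow 2).trans (A1.L2.trans (Ideal.span_le.2 ?_))
    have h : Sq2 ∈ abFilt 2 := TwoSidedIdeal.subset_span (by simp)
    rintro s (rfl | rfl)
    · exact TwoSidedIdeal.mem_asIdeal.2 (TwoSidedIdeal.mul_mem_left _ _ _ h)
    · exact TwoSidedIdeal.mem_asIdeal.2 (TwoSidedIdeal.mul_mem_right _ _ _ h)
  | 3 =>
    refine (A1.L_pow 3).trans (A1.L3.trans (Ideal.span_le.2 ?_))
    have h : Sq1 * Sq2 ∈ abFilt 3 := TwoSidedIdeal.subset_span (by simp)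
    have h' : Sq2 * Sq1 ∈ abFilt 3 := TwoSidedIdeal.subset_span (by simp)
    rintro s (rfl | rfl)
    · exact TwoSidedIdeal.mem_asIdeal.2 (TwoSidedIdeal.mul_mem_left _ _ _ h')
    · exact TwoSidedIdeal.mem_asIdeal.2 (TwoSidedIdeal.mul_mem_left _ _ _ h)
  | 4 =>
    refine (A1.L_pow 4).trans (A1.L4.trans (Ideal.span_le.2 ?_))
    have h : Q0 ∈ abFilt 4 := TwoSidedIdeal.subset_span (by simp)
    rintro s rfl
    have e : Sq1 * (Sq2 * (Sq1 * Sq2)) = Sq1 * Sq2 * Q0 := by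
      simp [Q0, mul_add, mul_assoc, A1.bb', A1.aa']
    rw [e]
    exact TwoSidedIdeal.mem_asIdeal.2 (TwoSidedIdeal.mul_mem_left _ _ _ h)
  | m + 5 => exact (A1.L_pow _).trans ((A1.L_big m).trans bot_le)
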